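/- For i = 1, 2, let C_i be an entropy space with entropy function h_i and λ_i : C_i → C_i a map such that λ_2 is monotone. If μ : C_1 → C_2 is an upper connection from λ_1 to λ_2, then h_1(λ_1) ≤ h_2(λ_2). -/

import Mathlib

open Filter ENNReal Topology

/-- An *entropy space*: a pre-ordered semigroup `(C, ≺, ∧)` satisfying (C1) and (C2),
together with an entropy function `h : C → [0,∞]` satisfying (H1) and (H2). -/
structure EntropySpace (C : Type*) where
  prec : C → C → Prop
  meet : C → C → C
  h : C → ℝ≥0∞
  prec_refl : ∀ a, prec a a
  prec_trans : ∀ a b c, prec a b → prec b c → prec a c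
  meet_assoc : ∀ a b c, meet (meet a b) c = meet a (meet b c)
  c1_left : ∀ a b, prec (meet a b) a
  c1_right : ∀ a b, prec (meet a b) b
  c2 : ∀ a a' b b', prec a a' → prec b b' → prec (meet a b) (meet a' b')
  h1 : ∀ a b, prec a b → h b ≤ h a
  h2 : ∀ a b, h (meet a b) ≤ h a + h b

variable {C : Type*}

/-- `α_0^n[λ] = α ∧ λα ∧ ⋯ ∧ λ^n α` (a product of `n + 1` factors). -/
def EntropySpace.orbitProd (E : EntropySpace C) (l : C → C) (a : C) : ℕ → C
  | 0 => a
  | n + 1 => E.meet (E.orbitProd l a n) (l^[n + 1] a)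

/-- `h(λ, α) = limsup_{n → ∞} (1/n) · h(α_0^{n-1}[λ])`, computed in `[0,∞]`. -/
noncomputable def EntropySpace.relEntropy (E : EntropySpace C) (l : C → C) (a : C) : ℝ≥0∞ :=
  Filter.atTop.limsup fun n : ℕ => E.h (E.orbitProd l a n) / ((n : ℝ≥0∞) + 1)

/-- `h(λ) = sup_{α ∈ C} h(λ, α)`. -/
noncomputable def EntropySpace.entropy (E : EntropySpace C) (l : C → C) : ℝ≥0∞ :=
  ⨆ a : C, E.relEntropy l a

theorem iterate_map_le_map_iterate {α β : Type*} [Preorder β] {f : α → α} {g : β → β} {φ : α → β}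
    (hg : Monotone g) (h : ∀ a, g (φ a) ≤ φ (f a)) (a : α) (n : ℕ) :
    g^[n] (φ a) ≤ φ (f^[n] a) := by
  refine hg.seq_le_seq (x := fun k => g^[k] (φ a)) (y := fun k => φ (f^[k] a)) n le_rfl
    (fun k _ => ?_) (fun k _ => ?_)
  · exact (Function.iterate_succ_apply' g k (φ a)).le
  · simpa only [Function.iterate_succ_apply'] using h (f^[k] a)

namespace EntropySpace

/-- The preorder `≺` of an entropy space as a `Preorder`, giving access to order lemmas. It is not
an instance because it depends on `E` and not only on the carrier `C`. -/
abbrev toPreorder (E : EntropySpace C) : Preorder C where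
  le := E.prec
  le_refl := E.prec_refl
  le_trans := E.prec_trans

variable {C₁ C₂ : Type*} {E₁ : EntropySpace C₁} {E₂ : EntropySpace C₂}
  {l₁ : C₁ → C₁} {l₂ : C₂ → C₂} {μ : C₁ → C₂}

theorem orbitProd_map_prec_map_orbitProd
    (hl₂ : ∀ a b, E₂.prec a b → E₂.prec (l₂ a) (l₂ b))
    (hmeet : ∀ a b, E₂.prec (E₂.meet (μ a) (μ b)) (μ (E₁.meet a b)))
    (hmap : ∀ a, E₂.prec (l₂ (μ a)) (μ (l₁ a))) (a : C₁) (n : ℕ) :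
    E₂.prec (E₂.orbitProd l₂ (μ a) n) (μ (E₁.orbitProd l₁ a n)) := by
  let := E₂.toPreorder
  induction n with
  | zero => exact E₂.prec_refl _
  | succ n ih =>
    have hiterate : E₂.prec (l₂^[n + 1] (μ a)) (μ (l₁^[n + 1] a)) :=
      iterate_map_le_map_iterate hl₂ hmap a (n + 1)
    exact E₂.prec_trans _ _ _ (E₂.c2 _ _ _ _ ih hiterate) (hmeet _ _)

theorem relEntropy_le_relEntropy_map
    (hl₂ : ∀ a b, E₂.prec a b → E₂.prec (l₂ a) (l₂ b))
    (hmeet : ∀ a b, E₂.prec (E₂.meet (μ a) (μ b)) (μ (E₁.meet a b)))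
    (hh : ∀ a, E₁.h a ≤ E₂.h (μ a))
    (hmap : ∀ a, E₂.prec (l₂ (μ a)) (μ (l₁ a))) (a : C₁) :
    E₁.relEntropy l₁ a ≤ E₂.relEntropy l₂ (μ a) := by
  have horbit (n : ℕ) : E₁.h (E₁.orbitProd l₁ a n) ≤ E₂.h (E₂.orbitProd l₂ (μ a) n) :=
    (hh _).trans (E₂.h1 _ _ (orbitProd_map_prec_map_orbitProd hl₂ hmeet hmap a n))
  exact limsup_le_limsup (Eventually.of_forall fun n => ENNReal.div_le_div_right (horbit n) _)

end EntropySpace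

theorem stmt_8_general {C₁ C₂ : Type*} (E₁ : EntropySpace C₁) (E₂ : EntropySpace C₂)
    (l₁ : C₁ → C₁) (l₂ : C₂ → C₂)
    (hmono₂ : ∀ a b, E₂.prec a b → E₂.prec (l₂ a) (l₂ b))
    (μ : C₁ → C₂)
    (hu1 : ∀ a b, E₂.prec (E₂.meet (μ a) (μ b)) (μ (E₁.meet a b)))
    (hu2 : ∀ a, E₁.h a ≤ E₂.h (μ a))
    (hu3 : ∀ a, E₂.prec (l₂ (μ a)) (μ (l₁ a))) :
    E₁.entropy l₁ ≤ E₂.entropy l₂ :=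
  iSup_mono' fun a =>
    ⟨μ a, EntropySpace.relEntropy_le_relEntropy_map hmono₂ hu1 hu2 hu3 a⟩

/-- If `μ : λ₁ → λ₂` is an upper connection and `λ₂` is monotone, then `h(λ₁) ≤ h(λ₂)`. -/
theorem stmt_8 {C₁ C₂ : Type*} (E₁ : EntropySpace C₁) (E₂ : EntropySpace C₂)
    (l₁ : C₁ → C₁) (l₂ : C₂ → C₂)
    (hmono₂ : ∀ a b, E₂.prec a b → E₂.prec (l₂ a) (l₂ b))
    (μ : C₁ → C₂)
    (hμmono : ∀ a b, E₁.prec a b → E₂.prec (μ a) (μ b))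
    (hu1 : ∀ a b, E₂.prec (E₂.meet (μ a) (μ b)) (μ (E₁.meet a b)))
    (hu2 : ∀ a, E₁.h a ≤ E₂.h (μ a))
    (hu3 : ∀ a, E₂.prec (l₂ (μ a)) (μ (l₁ a))) :
    E₁.entropy l₁ ≤ E₂.entropy l₂ :=
  stmt_8_general E₁ E₂ l₁ l₂ hmono₂ μ hu1 hu2 hu3
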